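/- arXiv:math/9909183 — 2 statements merged into one kernel-verified Lean document; each statement's English description precedes it below -/
import Mathlib

section
/- The set {L(n) : n ∈ ℤ} ∪ {id_S} is ℂ-linearly independent in End_ℂ(S); its ℂ-linear span 𝔳 is a Lie subalgebra of End_ℂ(S) (under commutator); and the ℂ-linear map π : 𝔳 → End_ℂ(ℂ[t,t⁻¹]) determined by π(L(n)) = −M_{tⁿ}∘D and π(id_S) = 0 is a Lie algebra homomorphism whose kernel is ℂ·id_S and whose image is the ℂ-linear span of {M_{tⁿ}∘D : n ∈ ℤ}. (Thus 𝔳 is a one-dimensional central extension of the Lie algebra of vector fields on the circle.) -/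
/-!
The operators `L(n)` are controlled through their action on the Heisenberg operators.

A polynomial is killed by `h(j)` for large `j`, so the sum defining `L(n) p` is finite, and the
Heisenberg relations (`hOp_lie`) give `[h(k), L(n)] = k h(n+k)` (`lie_hOp_L`). By the Jacobi
identity `[L(m), L(n)] - (m-n) L(m+n)` then commutes with every `h(k)`. Such an operator is a
scalar (`exists_scalar_of_commute`), which gives the Virasoro relations up to a central term
(`exists_lie_L`); the value `(m³-m)/12 δ_{m+n,0}` of that term is not needed, since `π` kills the
identity.

The double commutator `[h(l), [h(k), L(n)]]` is the scalar `k l` if `n = -(k+l)` and `0` otherwise,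
and it vanishes on the identity, so it separates the coefficients of a linear relation
(`linearIndependent_L`). Hence `π` can be defined on a basis. It respects brackets because the
operators `-tⁿ D` satisfy the Witt relations (`vectorField_lie`), and its kernel is read off from
`(-tⁿ D)(t) = -tⁿ⁺¹`.
-/

noncomputable section

/-- The polynomial algebra `S = ℂ[a₁,a₂,a₃,…]`, with variables indexed by `ℕ+`. -/
abbrev SS : Type := MvPolynomial ℕ+ ℂ

/-- The Heisenberg operators `h(n)` on `S`: for `n < 0`, multiplication by `a₋ₙ`;
for `n > 0`, `n·∂/∂aₙ`; and `h(0) = 0`. -/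
noncomputable def hOp (n : ℤ) : Module.End ℂ SS :=
  if _h1 : 0 < n then
    (n : ℂ) • (MvPolynomial.pderiv (R := ℂ) (⟨n.toNat, by omega⟩ : ℕ+)).toLinearMap
  else if _h2 : n < 0 then
    LinearMap.mulLeft ℂ (MvPolynomial.X (⟨(-n).toNat, by omega⟩ : ℕ+))
  else 0

/-- The normally ordered product `:h(i)h(j):`  (equal to `h(i)∘h(j)` if `i ≤ j`,
and to `h(j)∘h(i)` if `i > j`; note `f * g` is composition in `Module.End`). -/
noncomputable def nord (i j : ℤ) : Module.End ℂ SS :=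
  if i ≤ j then hOp i * hOp j else hOp j * hOp i

attribute [local instance] LieRing.ofAssociativeRing

/-! ### The Heisenberg operators -/

lemma hOp_pos (n : ℕ+) :
    hOp (n : ℤ) = ((n : ℤ) : ℂ) • (MvPolynomial.pderiv (R := ℂ) n).toLinearMap := by
  have h : (0 : ℤ) < (n : ℤ) := by exact_mod_cast n.pos
  exact dif_pos h

lemma hOp_neg (n : ℕ+) : hOp (-(n : ℤ)) = LinearMap.mulLeft ℂ (MvPolynomial.X n) := by
  have h : (0 : ℤ) < (n : ℤ) := by exact_mod_cast n.pos
  have h1 : ¬ (0 : ℤ) < -(n : ℤ) := by omega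
  have h2 : -(n : ℤ) < 0 := by omega
  refine (dif_neg h1).trans ((dif_pos h2).trans ?_)
  congr
  simp only [neg_neg]
  rfl

lemma hOp_zero : hOp 0 = 0 := by
  simp [hOp]

lemma int_cases (i : ℤ) : i = 0 ∨ (∃ n : ℕ+, i = n) ∨ (∃ n : ℕ+, i = -(n : ℤ)) := by
  rcases lt_trichotomy i 0 with h | h | h
  · exact Or.inr (Or.inr ⟨⟨(-i).toNat, by omega⟩, by simp; omega⟩)
  · exact Or.inl h
  · exact Or.inr (Or.inl ⟨⟨i.toNat, by omega⟩, by simp; omega⟩)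

lemma pderiv_comm (m n : ℕ+) (p : SS) :
    MvPolynomial.pderiv m (MvPolynomial.pderiv n p)
      = MvPolynomial.pderiv n (MvPolynomial.pderiv m p) := by
  have h : ⁅MvPolynomial.pderiv (R := ℂ) m, MvPolynomial.pderiv (R := ℂ) n⁆ = 0 := by
    apply MvPolynomial.derivation_ext
    intro i
    simp [Derivation.commutator_apply, MvPolynomial.pderiv_X, Pi.single_apply, apply_ite]
  have := congrArg (fun d => d p) h
  simpa [Derivation.commutator_apply, sub_eq_zero] using this

/-- The Heisenberg relations `[h(i), h(j)] = i δ_{i+j,0}`. -/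
lemma hOp_lie (i j : ℤ) :
    ⁅hOp i, hOp j⁆ = (if i + j = 0 then (i : ℂ) else 0) • (1 : Module.End ℂ SS) := by
  rw [Ring.lie_def]
  rcases int_cases i with rfl | ⟨m, rfl⟩ | ⟨m, rfl⟩
  · simp [hOp_zero]
  · rcases int_cases j with rfl | ⟨n, rfl⟩ | ⟨n, rfl⟩
    · have := m.pos
      simp [hOp_zero]
    · have h : ¬ ((m : ℤ) + n = 0) := by have := m.pos; omega
      refine LinearMap.ext fun p => ?_
      simp [hOp_pos, h, pderiv_comm m n p, smul_comm (n : ℂ) (m : ℂ)]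
    · refine LinearMap.ext fun p => ?_
      by_cases h : m = n
      · subst h
        simp [hOp_pos, hOp_neg, smul_add]
      · have h' : ¬ ((m : ℤ) + -(n : ℤ) = 0) := by
          intro h2; apply h; apply PNat.eq; omega
        simp [hOp_pos, hOp_neg, h', MvPolynomial.pderiv_X_of_ne (Ne.symm h)]
  · rcases int_cases j with rfl | ⟨n, rfl⟩ | ⟨n, rfl⟩
    · have := m.pos
      simp [hOp_zero]
    · refine LinearMap.ext fun p => ?_
      by_cases h : n = m
      · subst h
        simp [hOp_pos, hOp_neg, smul_add]
      · have h' : ¬ (-(m : ℤ) + (n : ℤ) = 0) := by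
          intro h2; apply h; apply PNat.eq; omega
        simp [hOp_pos, hOp_neg, h', MvPolynomial.pderiv_X_of_ne (Ne.symm h)]
    · have h : ¬ (-(m : ℤ) + -(n : ℤ) = 0) := by have := m.pos; omega
      refine LinearMap.ext fun p => ?_
      simp [hOp_neg, h, mul_left_comm]

/-- A polynomial involves finitely many variables, so it is killed by `h(j)` for large `j`. -/
lemma exists_hOp_bound (p : SS) : ∃ N : ℤ, ∀ j, N < j → hOp j p = 0 := by
  obtain ⟨N, hN⟩ := (p.vars.image (fun n : ℕ+ => (n : ℤ))).bddAbove
  refine ⟨max N 0, fun j hj => ?_⟩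
  obtain ⟨h1, h2⟩ := max_lt_iff.1 hj
  rcases int_cases j with rfl | ⟨n, rfl⟩ | ⟨n, rfl⟩
  · omega
  · have hn : n ∉ p.vars := fun h => by
      have := hN (Finset.mem_coe.2 (Finset.mem_image_of_mem _ h))
      omega
    simp [hOp_pos, MvPolynomial.pderiv_eq_zero_of_notMem_vars hn]
  · have := n.pos
    omega

/-- Schur's lemma for the Fock space: an operator commuting with all `h(k)` is a scalar.
Commuting with the multiplications makes it multiplication by the image of `1`, and commuting
with the derivations makes that polynomial a constant. -/
lemma exists_scalar_of_commute (T : Module.End ℂ SS) (hT : ∀ k, ⁅T, hOp k⁆ = 0) :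
    ∃ c : ℂ, T = c • (1 : Module.End ℂ SS) := by
  have hc : ∀ k p, T (hOp k p) = hOp k (T p) := fun k p => by
    have := LinearMap.congr_fun (hT k) p
    simpa [Ring.lie_def, sub_eq_zero] using this
  have hmul : ∀ p, T p = p * T 1 := by
    intro p
    induction p using MvPolynomial.induction_on with
    | C a =>
      rw [← mul_one (MvPolynomial.C a), ← MvPolynomial.smul_eq_C_mul, map_smul, smul_mul_assoc,
        one_mul]
    | add p q hp hq => rw [map_add, hp, hq, add_mul]
    | mul_X p n hp =>
      have := hc (-(n : ℤ)) p
      simp only [hOp_neg, LinearMap.mulLeft_apply] at this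
      rw [mul_comm p, this, hp, mul_assoc]
  have hd : ∀ n, MvPolynomial.pderiv n (T 1) = 0 := by
    intro n
    have := hc (n : ℤ) 1
    simp only [hOp_pos, LinearMap.smul_apply,
      Derivation.coeFn_coe, Derivation.map_one_eq_zero, smul_zero, map_zero] at this
    have h2 := this.symm
    rw [smul_eq_zero] at h2
    refine h2.resolve_left ?_
    have := n.pos
    exact_mod_cast this.ne'
  have hvars : ∃ c, T 1 = MvPolynomial.C c := by
    refine ⟨MvPolynomial.coeff 0 (T 1), ?_⟩
    ext m
    rw [MvPolynomial.coeff_C]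
    split_ifs with h
    · rw [← h]
    · obtain ⟨n, hn⟩ : ∃ n, m n ≠ 0 := by
        by_contra! h2
        exact h (Finsupp.ext fun n => (h2 n).symm)
      have h3 := congrArg (MvPolynomial.coeff (m - Finsupp.single n 1)) (hd n)
      have h4 : m - Finsupp.single n 1 + Finsupp.single n 1 = m := by
        apply tsub_add_cancel_of_le
        rw [Finsupp.single_le_iff]
        omega
      rw [MvPolynomial.coeff_pderiv, h4, MvPolynomial.coeff_zero, mul_eq_zero] at h3
      refine h3.resolve_right ?_
      exact_mod_cast Nat.succ_ne_zero ((m - (Finsupp.single n 1 : ℕ+ →₀ ℕ)) n)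
  obtain ⟨c, hc'⟩ := hvars
  refine ⟨c, LinearMap.ext fun p => ?_⟩
  rw [hmul, hc', mul_comm, ← MvPolynomial.smul_eq_C_mul]
  rfl

/-! ### The Virasoro operators -/

lemma lie_nord (k i j : ℤ) :
    ⁅hOp k, nord i j⁆ = (if k + i = 0 then (k : ℂ) else 0) • hOp j
      + (if k + j = 0 then (k : ℂ) else 0) • hOp i := by
  have key : ∀ a b : ℤ, ⁅hOp k, hOp a * hOp b⁆ = (if k + a = 0 then (k : ℂ) else 0) • hOp b
      + (if k + b = 0 then (k : ℂ) else 0) • hOp a := by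
    intro a b
    have h : ⁅hOp k, hOp a * hOp b⁆ = ⁅hOp k, hOp a⁆ * hOp b + hOp a * ⁅hOp k, hOp b⁆ := by
      simp only [Ring.lie_def, mul_sub, sub_mul, mul_assoc]; abel
    rw [h, hOp_lie, hOp_lie, smul_mul_assoc, one_mul, mul_smul_comm, mul_one]
  unfold nord
  by_cases h : i ≤ j
  · rw [if_pos h, key]
  · rw [if_neg h, key, add_comm]

lemma nord_apply_eq_zero {p : SS} {N : ℤ} (hN : ∀ j, N < j → hOp j p = 0) {i j : ℤ}
    (h : N < i ∨ N < j) : nord i j p = 0 := by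
  unfold nord
  split_ifs with hij
  · rw [Module.End.mul_apply, hN j (by omega), map_zero]
  · rw [Module.End.mul_apply, hN i (by omega), map_zero]

lemma finsum_nord {p : SS} {N M n : ℤ} (hN : ∀ j, N < j → hOp j p = 0) (h1 : N ≤ M)
    (h2 : N - n ≤ M) :
    ∑ᶠ j : ℤ, nord j (n - j) p = ∑ j ∈ Finset.Icc (-M) M, nord j (n - j) p := by
  apply finsum_eq_sum_of_support_subset
  intro j hj
  rw [Finset.coe_Icc, Set.mem_Icc]
  by_contra h
  refine hj (nord_apply_eq_zero hN ?_)
  omega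

/-- The bosonic currents are primary of weight one: `[h(k), L(n)] = k h(n+k)`. -/
lemma lie_hOp_L {L : ℤ → Module.End ℂ SS}
    (hL : ∀ (n : ℤ) (p : SS), L n p = (1 / 2 : ℂ) • ∑ᶠ j : ℤ, nord j (n - j) p) (k n : ℤ) :
    ⁅hOp k, L n⁆ = (k : ℂ) • hOp (n + k) := by
  refine LinearMap.ext fun p => ?_
  obtain ⟨N₁, hN₁⟩ := exists_hOp_bound p
  obtain ⟨N₂, hN₂⟩ := exists_hOp_bound (hOp k p)
  -- A window large enough for both finite sums, and containing both resonant indices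
  -- `j = -k` and `j = n + k`.
  set M : ℤ := |N₁| + |N₂| + |n| + |k| with hM
  have e1 := finsum_nord (n := n) (M := M) hN₁ (by grind) (by grind)
  have e2 := finsum_nord (n := n) (M := M) hN₂ (by grind) (by grind)
  have hterm : ∀ j, hOp k (nord j (n - j) p) - nord j (n - j) (hOp k p)
      = (if j = -k then (k : ℂ) • hOp (n + k) p else 0)
        + (if j = n + k then (k : ℂ) • hOp (n + k) p else 0) := by
    intro j
    have h := LinearMap.congr_fun (lie_nord k j (n - j)) p
    simp only [Ring.lie_def, LinearMap.sub_apply, Module.End.mul_apply, LinearMap.add_apply,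
      LinearMap.smul_apply] at h
    rw [h]
    congr 1
    · by_cases hj : j = -k
      · subst hj; simp
      · rw [if_neg hj, if_neg (by omega), zero_smul]
    · by_cases hj : j = n + k
      · subst hj; simp
      · rw [if_neg hj, if_neg (by omega), zero_smul]
  rw [Ring.lie_def, LinearMap.sub_apply, Module.End.mul_apply, Module.End.mul_apply, hL, hL, e1,
    e2, map_smul, ← smul_sub, map_sum, ← Finset.sum_sub_distrib, Finset.sum_congr rfl
    (fun j _ => hterm j), Finset.sum_add_distrib, Finset.sum_ite_eq', Finset.sum_ite_eq',
    if_pos (by rw [Finset.mem_Icc]; grind), if_pos (by rw [Finset.mem_Icc]; grind),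
    LinearMap.smul_apply, ← two_smul ℂ, smul_smul]
  norm_num

/-- The Virasoro relations up to an unspecified central term, obtained from `lie_hOp_L`, the
Jacobi identity and Schur's lemma. -/
lemma exists_lie_L {L : ℤ → Module.End ℂ SS}
    (hL : ∀ (n : ℤ) (p : SS), L n p = (1 / 2 : ℂ) • ∑ᶠ j : ℤ, nord j (n - j) p) (m n : ℤ) :
    ∃ c : ℂ, ⁅L m, L n⁆ = ((m : ℂ) - n) • L (m + n) + c • (1 : Module.End ℂ SS) := by
  have hcomm : ∀ k, ⁅⁅L m, L n⁆ - ((m : ℂ) - n) • L (m + n), hOp k⁆ = 0 := by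
    intro k
    rw [← lie_skew, neg_eq_zero, lie_sub, lie_smul _ (hOp k) (L (m + n)), leibniz_lie, lie_hOp_L hL,
      lie_hOp_L hL, lie_hOp_L hL, smul_lie _ (hOp (m + k)) (L n), lie_smul _ (L m) (hOp (n + k)),
      lie_hOp_L hL, ← lie_skew (L m) (hOp (n + k)), lie_hOp_L hL,
      show n + (m + k) = m + n + k by ring, show m + (n + k) = m + n + k by ring]
    push_cast
    module
  obtain ⟨c, hc⟩ := exists_scalar_of_commute _ hcomm
  exact ⟨c, by rw [← hc]; abel⟩

/-- A double commutator with two Heisenberg operators isolates the coefficient of a single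
`L(n)`. -/
lemma lie_lie_L {L : ℤ → Module.End ℂ SS}
    (hL : ∀ (n : ℤ) (p : SS), L n p = (1 / 2 : ℂ) • ∑ᶠ j : ℤ, nord j (n - j) p) (l k n : ℤ) :
    ⁅hOp l, ⁅hOp k, L n⁆⁆
      = (if n = -(k + l) then (k : ℂ) * l else 0) • (1 : Module.End ℂ SS) := by
  rw [lie_hOp_L hL, lie_smul (k : ℂ) (hOp l) (hOp (n + k)), hOp_lie, smul_smul]
  congr 1
  by_cases h : n = -(k + l)
  · rw [if_pos h, if_pos (by omega)]
  · rw [if_neg h, if_neg (by omega), mul_zero]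

lemma smul_one_eq_zero {c : ℂ} (h : c • (1 : Module.End ℂ SS) = 0) : c = 0 :=
  (smul_eq_zero.1 h).resolve_right one_ne_zero

lemma linearIndependent_L {L : ℤ → Module.End ℂ SS}
    (hL : ∀ (n : ℤ) (p : SS), L n p = (1 / 2 : ℂ) • ∑ᶠ j : ℤ, nord j (n - j) p)
    {f : Option ℤ → Module.End ℂ SS} (hf0 : f none = 1) (hf : ∀ n : ℤ, f (some n) = L n) :
    LinearIndependent ℂ f := by
  rw [linearIndependent_iff]
  intro c hc
  have hsome : ∀ n, c (some n) = 0 := by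
    intro n
    -- Any `k` outside `{0, -n}` works; then `l = -(n + k)` is nonzero as well.
    obtain ⟨k, hk, hkn⟩ : ∃ k : ℤ, k ≠ 0 ∧ n + k ≠ 0 := ⟨|n| + 1, by grind, by grind⟩
    have h := congrArg (fun T => ⁅hOp (-(n + k)), ⁅hOp k, T⁆⁆) hc
    simp only [Finsupp.linearCombination_apply, Finsupp.sum, lie_sum, lie_smul, lie_zero] at h
    rw [Finset.sum_eq_single (some n)] at h
    · rw [hf, lie_lie_L hL, if_pos (by ring), smul_smul] at h
      have h' := smul_one_eq_zero h
      rcases mul_eq_zero.1 h' with h' | h'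
      · exact h'
      · rcases mul_eq_zero.1 h' with h' | h'
        · exact absurd (by exact_mod_cast h') hk
        · rw [Int.cast_neg, neg_eq_zero] at h'
          exact absurd (by exact_mod_cast h') hkn
    · rintro (_ | m) _ hm
      · simp [hf0, Ring.lie_def]
      · have : m ≠ n := fun h => hm (by rw [h])
        rw [hf, lie_lie_L hL, if_neg (by intro h; apply this; rw [h]; ring), zero_smul, smul_zero]
    · intro hn
      rw [Finsupp.notMem_support_iff.1 hn, zero_smul]
  have hnone : c none = 0 := by
    rw [Finsupp.linearCombination_apply, Finsupp.sum, Finset.sum_eq_single none] at hc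
    · rw [hf0] at hc
      exact smul_one_eq_zero hc
    · rintro (_ | m) _ hm
      · exact absurd rfl hm
      · rw [hsome, zero_smul]
    · intro hn
      rw [Finsupp.notMem_support_iff.1 hn, zero_smul]
  ext (_ | n)
  · exact hnone
  · exact hsome n

/-! ### Vector fields on the circle -/

lemma laurent_end_ext {A B : Module.End ℂ (LaurentPolynomial ℂ)}
    (h : ∀ k, A (LaurentPolynomial.T k) = B (LaurentPolynomial.T k)) : A = B := by
  refine LinearMap.ext fun p => ?_
  induction p using LaurentPolynomial.induction_on' with
  | add p q hp hq => rw [map_add, map_add, hp, hq]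
  | C_mul_T n a => rw [← LaurentPolynomial.smul_eq_C_mul, map_smul, map_smul, h]

lemma vectorField_lie {Dop : Module.End ℂ (LaurentPolynomial ℂ)}
    (hD : ∀ k : ℤ, Dop (LaurentPolynomial.T k) = (k : ℂ) • LaurentPolynomial.T k) (m n : ℤ) :
    ⁅-(LinearMap.mulLeft ℂ (LaurentPolynomial.T m) * Dop),
      -(LinearMap.mulLeft ℂ (LaurentPolynomial.T n) * Dop)⁆
      = ((m : ℂ) - n) • -(LinearMap.mulLeft ℂ (LaurentPolynomial.T (m + n)) * Dop) := by
  apply laurent_end_ext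
  intro k
  simp only [Ring.lie_def, LinearMap.sub_apply, Module.End.mul_apply,
    LinearMap.smul_apply, LinearMap.neg_apply, hD, map_smul, map_neg, LinearMap.mulLeft_apply,
    ← LaurentPolynomial.T_add]
  rw [show m + (n + k) = m + n + k by ring, show n + (m + k) = m + n + k by ring]
  push_cast
  module

/-- The span `𝔳` of `{L(n)} ∪ {id_S}` is a Lie subalgebra of `End_ℂ(S)`, the family is
linearly independent, and `𝔳` is a one-dimensional central extension of the Lie algebra
of vector fields on the circle, via `π(L(n)) = −M_{tⁿ}∘D`, `π(id_S) = 0`. -/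
theorem virasoro_is_central_extension_of_vector_fields
    (L : ℤ → Module.End ℂ SS)
    (hL : ∀ (n : ℤ) (p : SS), L n p = (1 / 2 : ℂ) • ∑ᶠ j : ℤ, nord j (n - j) p)
    (Dop : Module.End ℂ (LaurentPolynomial ℂ))
    (hD : ∀ k : ℤ, Dop (LaurentPolynomial.T k) = (k : ℂ) • LaurentPolynomial.T k)
    (f : Option ℤ → Module.End ℂ SS)
    (hf0 : f none = 1) (hf : ∀ n : ℤ, f (some n) = L n) :
    LinearIndependent ℂ f ∧
    (∀ x ∈ Submodule.span ℂ (Set.range f), ∀ y ∈ Submodule.span ℂ (Set.range f),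
        x * y - y * x ∈ Submodule.span ℂ (Set.range f)) ∧
    ∃ π : (Submodule.span ℂ (Set.range f)) →ₗ[ℂ] Module.End ℂ (LaurentPolynomial ℂ),
      (∀ (n : ℤ) (hn : L n ∈ Submodule.span ℂ (Set.range f)),
          π ⟨L n, hn⟩ = -(LinearMap.mulLeft ℂ (LaurentPolynomial.T n) * Dop)) ∧
      (∀ h1 : (1 : Module.End ℂ SS) ∈ Submodule.span ℂ (Set.range f),
          π ⟨1, h1⟩ = 0) ∧
      (∀ (x y : Submodule.span ℂ (Set.range f))
          (hxy : ((x : Module.End ℂ SS) * y - (y : Module.End ℂ SS) * x)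
              ∈ Submodule.span ℂ (Set.range f)),
          π ⟨(x : Module.End ℂ SS) * y - (y : Module.End ℂ SS) * x, hxy⟩
            = π x * π y - π y * π x) ∧
      (∀ v : Submodule.span ℂ (Set.range f),
          π v = 0 ↔ ∃ c : ℂ, (v : Module.End ℂ SS) = c • (1 : Module.End ℂ SS)) ∧
      LinearMap.range π
        = Submodule.span ℂ
            {g | ∃ n : ℤ, g = LinearMap.mulLeft ℂ (LaurentPolynomial.T n) * Dop} := by
  have hli := linearIndependent_L hL hf0 hf
  let g : Option ℤ → Module.End ℂ (LaurentPolynomial ℂ) := fun o =>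
    o.elim 0 (fun n => -(LinearMap.mulLeft ℂ (LaurentPolynomial.T n) * Dop))
  let b := Module.Basis.span hli
  have hb : ∀ o, ((b o : Submodule.span ℂ (Set.range f)) : Module.End ℂ SS) = f o :=
    fun o => congrArg Subtype.val (Module.Basis.span_apply hli o)
  let π := b.constr ℂ g
  have hπb : ∀ o, π (b o) = g o := fun o => b.constr_basis ℂ g o
  have hπb' : ∀ n, π (b (some n)) = -(LinearMap.mulLeft ℂ (LaurentPolynomial.T n) * Dop) :=
    fun n => hπb (some n)
  have hbr : ∀ o o', ∃ z : Submodule.span ℂ (Set.range f),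
      (z : Module.End ℂ SS) = ⁅f o, f o'⁆ ∧ π z = ⁅g o, g o'⁆ := by
    rintro (_ | m) (_ | n)
    · exact ⟨0, by simp, by simp⟩
    · exact ⟨0, by simp [hf0, Ring.lie_def], by simp [g, Ring.lie_def]⟩
    · exact ⟨0, by simp [hf0, Ring.lie_def], by simp [g, Ring.lie_def]⟩
    · obtain ⟨c, hc⟩ := exists_lie_L hL m n
      refine ⟨((m : ℂ) - n) • b (some (m + n)) + c • b none, ?_, ?_⟩
      · rw [Submodule.coe_add, Submodule.coe_smul, Submodule.coe_smul, hb, hb, hf, hf, hf, hf0, hc]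
      · rw [map_add, map_smul, map_smul, hπb, hπb]
        simp only [g, Option.elim, smul_zero, add_zero]
        exact (vectorField_lie hD m n).symm
  -- The bracket of two elements stays in the span and is respected by `π`; both facts are
  -- bilinear, so they extend together from basis vectors.
  have hlie : ∀ x y : Submodule.span ℂ (Set.range f), ∃ z : Submodule.span ℂ (Set.range f),
      (z : Module.End ℂ SS) = ⁅(x : Module.End ℂ SS), (y : Module.End ℂ SS)⁆
        ∧ π z = ⁅π x, π y⁆ := by
    intro x y
    have hx := b.mem_span x
    have hy := b.mem_span y
    induction hx, hy using Submodule.span_induction₂ with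
    | mem_mem x y hx hy =>
      obtain ⟨o, rfl⟩ := hx
      obtain ⟨o', rfl⟩ := hy
      rw [hb, hb, hπb, hπb]
      exact hbr o o'
    | zero_left y hy => exact ⟨0, by simp, by simp⟩
    | zero_right x hx => exact ⟨0, by simp, by simp⟩
    | add_left x y z hx hy hz h₁ h₂ =>
      obtain ⟨u, hu, hu'⟩ := h₁
      obtain ⟨v, hv, hv'⟩ := h₂
      exact ⟨u + v, by rw [Submodule.coe_add, hu, hv, Submodule.coe_add, add_lie],
        by rw [map_add, hu', hv', map_add, add_lie]⟩
    | add_right x y z hx hy hz h₁ h₂ =>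
      obtain ⟨u, hu, hu'⟩ := h₁
      obtain ⟨v, hv, hv'⟩ := h₂
      exact ⟨u + v, by rw [Submodule.coe_add, hu, hv, Submodule.coe_add, lie_add],
        by rw [map_add, hu', hv', map_add, lie_add]⟩
    | smul_left c x y hx hy h =>
      obtain ⟨u, hu, hu'⟩ := h
      exact ⟨c • u, by rw [Submodule.coe_smul, hu, Submodule.coe_smul, smul_lie],
        by rw [map_smul, hu', map_smul, smul_lie c (π x)]⟩
    | smul_right c x y hx hy h =>
      obtain ⟨u, hu, hu'⟩ := h
      exact ⟨c • u, by rw [Submodule.coe_smul, hu, Submodule.coe_smul, lie_smul],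
        by rw [map_smul, hu', map_smul, lie_smul c (π x) (π y)]⟩
  refine ⟨hli, ?_, π, ?_, ?_, ?_, ?_, ?_⟩
  · intro x hx y hy
    obtain ⟨z, hz, -⟩ := hlie ⟨x, hx⟩ ⟨y, hy⟩
    rw [← Ring.lie_def, ← hz]
    exact z.2
  · intro n hn
    rw [← hπb' n]
    congr 1
    exact Subtype.ext (by rw [hb, hf])
  · intro h1
    refine Eq.trans ?_ (hπb none)
    congr 1
    exact Subtype.ext (by rw [hb, hf0])
  · intro x y hxy
    obtain ⟨z, hz, hz'⟩ := hlie x y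
    refine Eq.trans ?_ hz'
    congr 1
    exact Subtype.ext hz.symm
  · intro v
    constructor
    · intro hv
      -- The coefficient of `t^(n+1)` in `π v (t)` is minus the `L(n)`-coordinate of `v`.
      have hcoord : ∀ n, b.repr v (some n) = 0 := by
        intro n
        have h : π v (LaurentPolynomial.T 1) = 0 := by rw [hv]; rfl
        rw [← b.linearCombination_repr v, Finsupp.linearCombination_apply, Finsupp.sum, map_sum,
          LinearMap.sum_apply] at h
        have h2 := congrArg (fun q : LaurentPolynomial ℂ => q.coeff (n + 1)) h
        have hterm : ∀ o, (π (b.repr v o • b o) (LaurentPolynomial.T 1)).coeff (n + 1)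
            = if o = some n then -b.repr v o else 0 := by
          rintro (_ | m)
          · rw [map_smul, hπb]
            simp [g]
          · rw [map_smul, hπb', LinearMap.smul_apply, LinearMap.neg_apply, Module.End.mul_apply,
              hD, LinearMap.mulLeft_apply, Int.cast_one, one_smul, ← LaurentPolynomial.T_add]
            by_cases hm : m = n
            · simp [hm]
            · simp [hm]
        simp only [AddMonoidAlgebra.coeff_sum, Finsupp.finsetSum_apply, hterm,
          Finset.sum_ite_eq', Finsupp.mem_support_iff] at h2
        by_contra hne
        rw [if_pos hne] at h2
        exact hne (neg_eq_zero.1 h2)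
      refine ⟨b.repr v none, ?_⟩
      have h := b.linearCombination_repr v
      rw [Finsupp.linearCombination_apply, Finsupp.sum, Finset.sum_eq_single none] at h
      · rw [← hf0, ← hb, ← Submodule.coe_smul, h]
      · rintro (_ | m) _ hm
        · exact absurd rfl hm
        · rw [hcoord, zero_smul]
      · intro hn
        rw [Finsupp.notMem_support_iff.1 hn, zero_smul]
    · rintro ⟨c, hc⟩
      have : v = c • b none := Subtype.ext (by rw [hc, Submodule.coe_smul, hb, hf0])
      rw [this, map_smul, hπb]
      exact smul_zero c
  · rw [b.constr_range]
    apply le_antisymm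
    · rw [Submodule.span_le]
      rintro _ ⟨_ | n, rfl⟩
      · exact Submodule.zero_mem _
      · exact Submodule.neg_mem _ (Submodule.subset_span ⟨n, rfl⟩)
    · rw [Submodule.span_le]
      rintro _ ⟨n, rfl⟩
      rw [← neg_neg (LinearMap.mulLeft ℂ (LaurentPolynomial.T n) * Dop)]
      exact Submodule.neg_mem _ (Submodule.subset_span ⟨some n, rfl⟩)
end
end

section
/- The family of operators {L⁽ᵖ⁾(0) : p ∈ ℕ} ∪ {id_S} is ℂ-linearly independent in End_ℂ(S). -/
/-!
Every `L⁽ᵖ⁾(0)` kills `1`, and has each variable `aₙ` as an eigenvector: only `j = ±n` contribute to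
the sum, so the eigenvalue is `(-n²)ᵖ n`. Evaluating at `1` shows that `id` is not in the span of
the `L⁽ᵖ⁾(0)`. A relation `∑ cₚ L⁽ᵖ⁾(0) = 0` evaluated at the `aₙ` says that the polynomial
`∑ cₚ yᵖ` vanishes at the infinitely many points `-n²`, `n ≥ 1`, so all `cₚ` are zero.
-/

noncomputable section

theorem hOp_pnat (n : ℕ+) (q : SS) :
    hOp (n : ℤ) q = (n : ℂ) • MvPolynomial.pderiv n q := by
  have h : (0 : ℤ) < ((n : ℕ) : ℤ) := by exact_mod_cast n.pos
  have key : hOp (n : ℤ) = (((n : ℕ) : ℤ) : ℂ) •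
      (MvPolynomial.pderiv (R := ℂ) n).toLinearMap := dif_pos h
  rw [key]
  simp

theorem hOp_neg_pnat (n : ℕ+) (q : SS) :
    hOp (-(n : ℤ)) q = MvPolynomial.X n * q := by
  -- with `n` in the form `k + 1`, the index `(- -n).toNat` in `hOp` reduces to `n`
  obtain ⟨_ | k, hk⟩ := n
  · exact absurd hk (lt_irrefl 0)
  have h1 : ¬ (0 : ℤ) < -((k + 1 : ℕ) : ℤ) := by omega
  have h2 : -((k + 1 : ℕ) : ℤ) < 0 := by omega
  have key : hOp (-((k + 1 : ℕ) : ℤ)) =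
      LinearMap.mulLeft ℂ (MvPolynomial.X (R := ℂ) (σ := ℕ+) ⟨k + 1, hk⟩) :=
    (dif_neg h1).trans (dif_pos h2)
  exact congrArg (fun T : Module.End ℂ SS => T q) key

theorem nord_zero (q : SS) : nord 0 (-0) q = 0 := by
  simp [nord, hOp]

theorem nord_pnat (n : ℕ+) (q : SS) :
    nord (n : ℤ) (-(n : ℤ)) q = MvPolynomial.X n * ((n : ℂ) • MvPolynomial.pderiv n q) := by
  have h : (0 : ℤ) < ((n : ℕ) : ℤ) := by exact_mod_cast n.pos
  rw [nord, if_neg (by omega), Module.End.mul_apply, hOp_pnat, hOp_neg_pnat]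

theorem nord_neg_pnat (n : ℕ+) (q : SS) :
    nord (-(n : ℤ)) (- -(n : ℤ)) q = MvPolynomial.X n * ((n : ℂ) • MvPolynomial.pderiv n q) := by
  have h : (0 : ℤ) < ((n : ℕ) : ℤ) := by exact_mod_cast n.pos
  rw [nord, if_pos (by omega), Module.End.mul_apply, neg_neg, hOp_pnat, hOp_neg_pnat]

theorem int_cases_pnat (j : ℤ) : j = 0 ∨ ∃ m : ℕ+, j = (m : ℤ) ∨ j = -(m : ℤ) := by
  rcases eq_or_ne j 0 with h | h
  · exact Or.inl h
  · refine Or.inr ⟨⟨j.natAbs, by omega⟩, ?_⟩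
    simp only [PNat.mk_coe]
    omega

theorem nord_one (j : ℤ) : nord j (-j) (1 : SS) = 0 := by
  rcases int_cases_pnat j with rfl | ⟨m, rfl | rfl⟩
  · exact nord_zero _
  · rw [nord_pnat]; simp
  · rw [nord_neg_pnat]; simp

theorem nord_X_of_ne (n : ℕ+) (j : ℤ) (h1 : j ≠ (n : ℤ)) (h2 : j ≠ -(n : ℤ)) :
    nord j (-j) (MvPolynomial.X n : SS) = 0 := by
  rcases int_cases_pnat j with rfl | ⟨m, rfl | rfl⟩
  · exact nord_zero _
  · have : n ≠ m := by rintro rfl; exact h1 rfl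
    rw [nord_pnat, MvPolynomial.pderiv_X_of_ne this]; simp
  · have : n ≠ m := by rintro rfl; exact h2 rfl
    rw [nord_neg_pnat, MvPolynomial.pderiv_X_of_ne this]; simp

/-- The defining sum of `L⁽ᵖ⁾(0)` at the variable `aₙ`: the eigenvalue is `(-n²)ᵖ n`. -/
theorem Lp0_X (p : ℕ) (n : ℕ+) :
    (1 / 2 : ℂ) • ∑ᶠ j : ℤ, ((j : ℂ) ^ p * (-(j : ℂ)) ^ p) • nord j (-j) (MvPolynomial.X n : SS)
      = ((-(n : ℂ) ^ 2) ^ p * n) • (MvPolynomial.X n : SS) := by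
  have hn : (0 : ℤ) < ((n : ℕ) : ℤ) := by exact_mod_cast n.pos
  rw [finsum_eq_sum_of_support_subset (s := {(n : ℤ), -(n : ℤ)})]
  · rw [Finset.sum_pair (by omega), nord_pnat, nord_neg_pnat, MvPolynomial.pderiv_X_self,
      mul_smul_comm, mul_one, smul_smul, smul_smul, ← add_smul, smul_smul]
    congr 1
    push_cast
    rw [← mul_pow, ← mul_pow]
    ring
  · intro j hj
    by_contra hmem
    simp only [Finset.coe_insert, Finset.coe_singleton, Set.mem_insert_iff,
      Set.mem_singleton_iff, not_or] at hmem
    exact hj (by simp only [nord_X_of_ne n j hmem.1 hmem.2, smul_zero])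

/-- The family `{L⁽ᵖ⁾(0) : p ∈ ℕ} ∪ {id_S}` is `ℂ`-linearly independent in `End_ℂ(S)`. -/
theorem Lp0_linearly_independent
    (L0 : ℕ → Module.End ℂ SS)
    (hL0 : ∀ (p : ℕ) (q : SS), L0 p q
      = (1 / 2 : ℂ) •
          ∑ᶠ j : ℤ, ((j : ℂ) ^ p * (-(j : ℂ)) ^ p) • nord j (-j) q)
    (g : Option ℕ → Module.End ℂ SS)
    (hg0 : g none = 1) (hg : ∀ p : ℕ, g (some p) = L0 p) :
    LinearIndependent ℂ g := by
  have hcomp : g ∘ (some : ℕ → Option ℕ) = L0 := funext hg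
  have hone : ∀ p, L0 p 1 = 0 := fun p => by simp [hL0, nord_one]
  have hX : ∀ p (n : ℕ+), L0 p (MvPolynomial.X n)
      = ((-(n : ℂ) ^ 2) ^ p * n) • (MvPolynomial.X n : SS) := fun p n => by rw [hL0, Lp0_X]
  rw [linearIndependent_option, hcomp, hg0]
  constructor
  · rw [linearIndependent_iff']
    intro s c hc
    let Q : Polynomial ℂ := ∑ p ∈ s, Polynomial.monomial p (c p)
    have hroot : ∀ n : ℕ+, Q.eval (-(n : ℂ) ^ 2) = 0 := by
      intro n
      have h := congrArg (fun T : Module.End ℂ SS => T (MvPolynomial.X n)) hc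
      simp only [LinearMap.sum_apply, LinearMap.smul_apply, hX, smul_smul, ← Finset.sum_smul,
        LinearMap.zero_apply] at h
      have h' := (smul_eq_zero.mp h).resolve_right (MvPolynomial.X_ne_zero n)
      have hn : (n : ℂ) ≠ 0 := by exact_mod_cast n.ne_zero
      simp only [← mul_assoc, ← Finset.sum_mul] at h'
      simpa [Q, Polynomial.eval_finsetSum] using (mul_eq_zero.mp h').resolve_right hn
    have hinj : Function.Injective (fun n : ℕ+ => -(n : ℂ) ^ 2) := by
      intro a b hab
      have h : ((a : ℕ) : ℂ) ^ 2 = ((b : ℕ) : ℂ) ^ 2 := neg_injective hab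
      have h2 : (a : ℕ) ^ 2 = (b : ℕ) ^ 2 := by exact_mod_cast h
      exact PNat.coe_injective (Nat.pow_left_injective two_ne_zero h2)
    have hQ : Q = 0 := Polynomial.eq_zero_of_infinite_isRoot Q
      ((Set.infinite_range_of_injective hinj).mono (by rintro _ ⟨n, rfl⟩; exact hroot n))
    intro p hp
    have h := congrArg (fun R : Polynomial ℂ => R.coeff p) hQ
    simpa [Q, Polynomial.finsetSum_coeff, Polynomial.coeff_monomial, hp] using h
  · intro hmem
    have hle : Submodule.span ℂ (Set.range L0)
        ≤ LinearMap.ker (LinearMap.applyₗ (R := ℂ) (M₂ := SS) (1 : SS)) := by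
      rw [Submodule.span_le]
      rintro _ ⟨p, rfl⟩
      exact hone p
    have h : (1 : SS) = 0 := hle hmem
    exact one_ne_zero h
end
end
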